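/- arXiv:1610.05925 — 6 statements merged into one kernel-verified Lean document; each statement's English description precedes it below -/
import Mathlib

section
/- Let K = σ·I_N + M B Mᵀ with M = Diag(√p)·Φ. If σ ∈ [0,1], B is positive semidefinite, and (1−σ)·Σ⁻¹ − B is positive semidefinite (where Σ = Φᵀ Diag(p) Φ is assumed positive definite), then 0 ⪯ K ⪯ I_N, i.e., both K and I_N − K are positive semidefinite, so K is a valid DPP marginal kernel. -/
open Matrix

/-!
When `MᴴM` is invertible, `P = M(MᴴM)⁻¹Mᴴ` is the orthogonal projection onto the column space of
`M`, so `0 ⪯ I - P`. The upper bound on `K = σI + MBMᴴ` is then visible from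
`I - K = (1 - σ)(I - P) + M((1 - σ)(MᴴM)⁻¹ - B)Mᴴ`. For `M = Diag(√p)Φ` the Gram matrix `MᴴM` is
`Σ`.
-/

section Gram

variable {ι n R : Type*} [Fintype ι] [DecidableEq ι]

theorem conjTranspose_diagonal_mul_mul_self [Semiring R] [StarRing R]
    (d : ι → R) (A : Matrix ι n R) :
    (diagonal d * A)ᴴ * (diagonal d * A) = Aᴴ * diagonal (star d * d) * A := by
  have hdiag : diagonal (star d * d) = diagonal (star d) * diagonal d :=
    (diagonal_mul_diagonal' _ _).symm
  rw [conjTranspose_mul, diagonal_conjTranspose, hdiag]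
  simp only [Matrix.mul_assoc]

theorem conjTranspose_diagonal_sqrt_mul_mul_self {p : ι → ℝ} (hp : ∀ x, 0 ≤ p x)
    (A : Matrix ι n ℝ) :
    (diagonal (fun x => √(p x)) * A)ᴴ * (diagonal (fun x => √(p x)) * A) =
      Aᵀ * diagonal p * A := by
  have hsqrt : star (fun x => √(p x)) * (fun x => √(p x)) = p :=
    funext fun x => Real.mul_self_sqrt (hp x)
  rw [conjTranspose_diagonal_mul_mul_self, hsqrt, conjTranspose_eq_transpose_of_trivial]

end Gram

section ColumnProjection

variable {ι n R : Type*} [Fintype n] [DecidableEq n] [Fintype ι] [CommRing R] [StarRing R]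

/-- The orthogonal projection `M(MᴴM)⁻¹Mᴴ` onto the column space of `M`. It has this meaning only
when the Gram matrix `MᴴM` is invertible; otherwise the inverse, hence the product, is `0`. -/
noncomputable def columnProjection (M : Matrix ι n R) : Matrix ι ι R :=
  M * (Mᴴ * M)⁻¹ * Mᴴ

theorem isStarProjection_columnProjection {M : Matrix ι n R} (hM : IsUnit (Mᴴ * M)) :
    IsStarProjection (columnProjection M) where
  isIdempotentElem := by
    have hdet : IsUnit (Mᴴ * M).det := (isUnit_iff_isUnit_det _).1 hM
    calc M * (Mᴴ * M)⁻¹ * Mᴴ * (M * (Mᴴ * M)⁻¹ * Mᴴ)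
        = M * ((Mᴴ * M)⁻¹ * (Mᴴ * M)) * (Mᴴ * M)⁻¹ * Mᴴ := by simp only [Matrix.mul_assoc]
      _ = M * (Mᴴ * M)⁻¹ * Mᴴ := by rw [nonsing_inv_mul _ hdet, Matrix.mul_one]
  isSelfAdjoint := isHermitian_mul_mul_conjTranspose M (isHermitian_conjTranspose_mul_self M).inv

theorem one_sub_smul_one_add_mul_mul_conjTranspose [DecidableEq ι]
    (M : Matrix ι n R) (B : Matrix n n R) (σ : R) :
    1 - (σ • 1 + M * B * Mᴴ) =
      (1 - σ) • (1 - columnProjection M) + M * ((1 - σ) • (Mᴴ * M)⁻¹ - B) * Mᴴ := by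
  rw [columnProjection, Matrix.mul_sub, Matrix.sub_mul, Matrix.mul_smul, Matrix.smul_mul]
  module

end ColumnProjection

section Loewner

variable {ι n R : Type*} [Fintype ι] [CommRing R] [PartialOrder R] [StarRing R] [StarOrderedRing R]

theorem posSemidef_of_isStarProjection {P : Matrix ι ι R} (hP : IsStarProjection P) :
    P.PosSemidef := by
  have hPP : Pᴴ * P = P := by
    rw [← star_eq_conjTranspose, hP.isSelfAdjoint.star_eq, hP.isIdempotentElem.eq]
  exact hPP ▸ posSemidef_conjTranspose_mul_self P

theorem stmt0_general [DecidableEq ι] [Fintype n] [DecidableEq n]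
    {M : Matrix ι n R} (hM : IsUnit (Mᴴ * M)) {σ : R} (hσ0 : 0 ≤ σ) (hσ1 : σ ≤ 1)
    {B : Matrix n n R} (hB : B.PosSemidef)
    (hBM : ((1 - σ) • (Mᴴ * M)⁻¹ - B).PosSemidef) :
    (σ • 1 + M * B * Mᴴ).PosSemidef ∧ (1 - (σ • 1 + M * B * Mᴴ)).PosSemidef := by
  constructor
  · exact (PosSemidef.one.smul hσ0).add (hB.mul_mul_conjTranspose_same M)
  · have hP : (1 - columnProjection M).PosSemidef :=
      posSemidef_of_isStarProjection (isStarProjection_columnProjection hM).one_sub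
    rw [one_sub_smul_one_add_mul_mul_conjTranspose]
    exact (hP.smul (sub_nonneg.2 hσ1)).add (hBM.mul_mul_conjTranspose_same M)

end Loewner

/-- If `K = σ•I + M B Mᵀ` with `M = Diag(√p)·Φ`, `σ ∈ [0,1]`,
`B ⪰ 0` and `(1-σ)·Σ⁻¹ - B ⪰ 0` (with `Σ = Φᵀ Diag(p) Φ` positive definite),
then `0 ⪯ K ⪯ I`. -/
theorem stmt0 {ι : Type*} [Fintype ι] [DecidableEq ι] {V : ℕ}
    (Φ : Matrix ι (Fin V) ℝ) (p : ι → ℝ) (hp : ∀ x, 0 ≤ p x)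
    (M : Matrix ι (Fin V) ℝ)
    (hM : M = Matrix.diagonal (fun x => Real.sqrt (p x)) * Φ)
    (S : Matrix (Fin V) (Fin V) ℝ) (hS : S = Φᵀ * Matrix.diagonal p * Φ)
    (hSpd : S.PosDef)
    (σ : ℝ) (hσ0 : 0 ≤ σ) (hσ1 : σ ≤ 1)
    (B : Matrix (Fin V) (Fin V) ℝ) (hB : B.PosSemidef)
    (hBS : ((1 - σ) • S⁻¹ - B).PosSemidef)
    (K : Matrix ι ι ℝ) (hK : K = σ • (1 : Matrix ι ι ℝ) + M * B * Mᵀ) :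
    K.PosSemidef ∧ ((1 : Matrix ι ι ℝ) - K).PosSemidef := by
  obtain rfl : Mᴴ * M = S := by rw [hM, hS, conjTranspose_diagonal_sqrt_mul_mul_self hp]
  rw [hK, ← conjTranspose_eq_transpose_of_trivial M]
  exact stmt0_general hSpd.isUnit hσ0 hσ1 hB hBS
end

section
/- Let L = α·I_N + M A Mᵀ with M = Diag(√p)·Φ, where α ≥ 0 and A ∈ ℝ^{V×V} is symmetric positive definite. Then I_N + L is invertible and the marginal kernel K := I_N − (I_N + L)⁻¹ equals σ·I_N + M B Mᵀ, where σ = α/(α+1) and B = (α+1)⁻² · (A⁻¹ + (α+1)⁻¹·Σ)⁻¹. -/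
open Matrix

/-!
The inverse of `(α + 1) • 1 + M A Mᴴ` is given by the Woodbury identity, whose inner matrix
`A⁻¹ + (α + 1)⁻¹ MᴴM` is invertible because it is the sum of a positive definite and a positive
semidefinite matrix. Subtracting from `1` turns the scalar part `(α + 1)⁻¹` into `α / (α + 1)`.
For `M = Diag(√p) Φ` the Gram matrix `MᴴM` is `Σ`.
-/

section Woodbury

variable {m n K : Type*} [DecidableEq m] [Field K]

lemma inv_smul_one_matrix [Fintype m] {c : K} (hc : c ≠ 0) :
    (c • (1 : Matrix m m K))⁻¹ = c⁻¹ • (1 : Matrix m m K) :=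
  inv_eq_right_inv <| by rw [smul_mul_smul_comm, mul_inv_cancel₀ hc, one_smul, one_mul]

variable [PartialOrder K] [StarRing K] [StarOrderedRing K]

lemma posDef_smul_one {c : K} (hc : 0 < c) : (c • (1 : Matrix m m K)).PosDef := by
  rw [smul_one_eq_diagonal]
  exact .diagonal fun _ => hc

variable [Fintype m] [Fintype n]

lemma isUnit_add_mul_mul_conjTranspose {D : Matrix m m K} (hD : D.PosDef)
    {A : Matrix n n K} (hA : A.PosSemidef) (M : Matrix m n K) :
    IsUnit (D + M * A * Mᴴ) :=
  (hD.add_posSemidef (hA.mul_mul_conjTranspose_same M)).isUnit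

variable [DecidableEq n]

lemma inv_add_mul_mul_conjTranspose {D : Matrix m m K} (hD : D.PosDef)
    {A : Matrix n n K} (hA : A.PosDef) (M : Matrix m n K) :
    (D + M * A * Mᴴ)⁻¹ = D⁻¹ - D⁻¹ * M * (A⁻¹ + Mᴴ * D⁻¹ * M)⁻¹ * Mᴴ * D⁻¹ := by
  have h_inner : (A⁻¹ + Mᴴ * D⁻¹ * M).PosDef :=
    hA.inv.add_posSemidef (hD.inv.posSemidef.conjTranspose_mul_mul_same M)
  exact add_mul_mul_inv_eq_sub D M A Mᴴ hD.isUnit hA.isUnit h_inner.isUnit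

lemma inv_smul_one_add_mul_mul_conjTranspose {c : K} (hc : 0 < c)
    {A : Matrix n n K} (hA : A.PosDef) (M : Matrix m n K) :
    (c • (1 : Matrix m m K) + M * A * Mᴴ)⁻¹ =
      c⁻¹ • (1 : Matrix m m K) - M * ((c ^ 2)⁻¹ • (A⁻¹ + c⁻¹ • (Mᴴ * M))⁻¹) * Mᴴ := by
  rw [inv_add_mul_mul_conjTranspose (posDef_smul_one hc) hA, inv_smul_one_matrix hc.ne']
  simp only [Matrix.smul_mul, Matrix.mul_smul, Matrix.one_mul, Matrix.mul_one, smul_smul, sq,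
    mul_inv]

theorem stmt1_general (M : Matrix m n K) {α : K} (hα : -1 < α)
    {A : Matrix n n K} (hA : A.PosDef) :
    IsUnit (1 + (α • (1 : Matrix m m K) + M * A * Mᴴ)) ∧
      1 - (1 + (α • (1 : Matrix m m K) + M * A * Mᴴ))⁻¹ =
        (α / (α + 1)) • (1 : Matrix m m K) +
          M * (((α + 1) ^ 2)⁻¹ • (A⁻¹ + (α + 1)⁻¹ • (Mᴴ * M))⁻¹) * Mᴴ := by
  have hc : 0 < α + 1 := neg_lt_iff_pos_add.mp hα
  have h_shift : 1 + (α • (1 : Matrix m m K) + M * A * Mᴴ) =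
      (α + 1) • (1 : Matrix m m K) + M * A * Mᴴ := by
    rw [add_smul, one_smul]
    abel
  have h_scalar : α / (α + 1) = 1 - (α + 1)⁻¹ := by
    rw [eq_sub_iff_add_eq, ← one_div, ← add_div, div_self hc.ne']
  rw [h_shift]
  refine ⟨isUnit_add_mul_mul_conjTranspose (posDef_smul_one hc) hA.posSemidef M, ?_⟩
  rw [inv_smul_one_add_mul_mul_conjTranspose hc hA, h_scalar, sub_smul, one_smul]
  abel

end Woodbury

lemma transpose_mul_self_diagonal_sqrt_mul {m n : Type*} [Fintype m] [DecidableEq m]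
    {p : m → ℝ} (hp : ∀ x, 0 ≤ p x) (Φ : Matrix m n ℝ) :
    (diagonal (fun x => √(p x)) * Φ)ᵀ * (diagonal (fun x => √(p x)) * Φ) =
      Φᵀ * diagonal p * Φ := by
  have h_sq : diagonal (fun x => √(p x)) * diagonal (fun x => √(p x)) = diagonal p := by
    simp only [diagonal_mul_diagonal, Real.mul_self_sqrt (hp _)]
  rw [transpose_mul, diagonal_transpose, ← h_sq]
  simp only [Matrix.mul_assoc]

/-- For `L = α•I + M A Mᵀ` with `α ≥ 0` and `A ≻ 0` symmetric,
`I + L` is invertible and `K = I - (I+L)⁻¹ = σ•I + M B Mᵀ` with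
`σ = α/(α+1)` and `B = (α+1)⁻² (A⁻¹ + (α+1)⁻¹ Σ)⁻¹`. -/
theorem stmt1 {ι : Type*} [Fintype ι] [DecidableEq ι] {V : ℕ}
    (Φ : Matrix ι (Fin V) ℝ) (p : ι → ℝ) (hp : ∀ x, 0 ≤ p x)
    (M : Matrix ι (Fin V) ℝ)
    (hM : M = Matrix.diagonal (fun x => Real.sqrt (p x)) * Φ)
    (S : Matrix (Fin V) (Fin V) ℝ) (hS : S = Φᵀ * Matrix.diagonal p * Φ)
    (α : ℝ) (hα : 0 ≤ α)
    (A : Matrix (Fin V) (Fin V) ℝ) (hA : A.PosDef)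
    (L : Matrix ι ι ℝ) (hL : L = α • (1 : Matrix ι ι ℝ) + M * A * Mᵀ) :
    IsUnit ((1 : Matrix ι ι ℝ) + L) ∧
      (1 : Matrix ι ι ℝ) - ((1 : Matrix ι ι ℝ) + L)⁻¹ =
        (α / (α + 1)) • (1 : Matrix ι ι ℝ) +
          M * (((α + 1) ^ 2)⁻¹ • (A⁻¹ + (α + 1)⁻¹ • S)⁻¹) * Mᵀ := by
  subst hM hS hL
  simpa only [conjTranspose_eq_transpose_of_trivial, transpose_mul_self_diagonal_sqrt_mul hp Φ]
    using stmt1_general (diagonal (fun x => √(p x)) * Φ) (neg_one_lt_zero.trans_le hα) hA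
end

section
/- Suppose the feature columns are orthonormal with respect to the weights p, i.e., Φᵀ Diag(p) Φ = I_V. Then for L = M·Diag(a)·Mᵀ with M = Diag(√p)·Φ and a ∈ ℝ^V, one has det(L + I_N) = ∏_{i=1}^{V} (a_i + 1). -/
open Matrix

section

variable {R ι κ : Type*} [Fintype ι] [DecidableEq ι]

theorem transpose_diagonal_mul_mul_self [NonUnitalCommSemiring R]
    (s : ι → R) (Φ : Matrix ι κ R) :
    (diagonal s * Φ)ᵀ * (diagonal s * Φ) = Φᵀ * diagonal (s * s) * Φ := by
  calc (diagonal s * Φ)ᵀ * (diagonal s * Φ)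
      = Φᵀ * (diagonal s * diagonal s) * Φ := by
        simp only [transpose_mul, diagonal_transpose, Matrix.mul_assoc]
    _ = Φᵀ * diagonal (s * s) * Φ := by rw [diagonal_mul_diagonal, ← Pi.mul_def]

variable [Fintype κ] [DecidableEq κ] [CommRing R]

theorem det_diagonal_add_one (a : κ → R) : (diagonal a + 1).det = ∏ i, (a i + 1) := by
  rw [← diagonal_one, diagonal_add, det_diagonal]

theorem det_mul_mul_add_one_of_mul_eq_one {A : Matrix ι κ R} {B : Matrix κ ι R}
    (hBA : B * A = 1) (D : Matrix κ κ R) : (A * D * B + 1).det = (D + 1).det := by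
  calc (A * D * B + 1).det
      = (A * (D * B) + 1).det := by rw [Matrix.mul_assoc]
    _ = (D * B * A + 1).det := det_mul_add_one_comm A (D * B)
    _ = (D + 1).det := by rw [Matrix.mul_assoc, hBA, Matrix.mul_one]

theorem stmt5_general (Φ : Matrix ι κ R) {p s : ι → R} (hs : s * s = p)
    (horth : Φᵀ * diagonal p * Φ = 1) (a : κ → R) :
    (diagonal s * Φ * diagonal a * (diagonal s * Φ)ᵀ + 1).det = ∏ i, (a i + 1) := by
  have hM : (diagonal s * Φ)ᵀ * (diagonal s * Φ) = 1 := by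
    rw [transpose_diagonal_mul_mul_self, hs, horth]
  rw [det_mul_mul_add_one_of_mul_eq_one hM, det_diagonal_add_one]

end

/-- If `Φᵀ Diag(p) Φ = I` then for `L = M Diag(a) Mᵀ`,
`det(L + I) = ∏ i, (a i + 1)`. -/
theorem stmt5 {ι : Type*} [Fintype ι] [DecidableEq ι] {V : ℕ}
    (Φ : Matrix ι (Fin V) ℝ) (p : ι → ℝ) (hp : ∀ x, 0 ≤ p x)
    (M : Matrix ι (Fin V) ℝ)
    (hM : M = Matrix.diagonal (fun x => Real.sqrt (p x)) * Φ)
    (horth : Φᵀ * Matrix.diagonal p * Φ = (1 : Matrix (Fin V) (Fin V) ℝ))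
    (a : Fin V → ℝ)
    (L : Matrix ι ι ℝ) (hL : L = M * Matrix.diagonal a * Mᵀ) :
    (L + 1).det = ∏ i : Fin V, (a i + 1) := by
  subst hM hL
  exact stmt5_general Φ (funext fun x => Real.mul_self_sqrt (hp x)) horth a
end

section
/- Suppose the number of items is N = 2^V and the second-moment matrix factorizes as Σ = Φᵀ Diag(p) Φ = Diag(ν) + μ·μᵀ for some ν, μ ∈ ℝ^V. Let L = α·I_N + M A Mᵀ with M = Diag(√p)·Φ, α ≥ 0, and A ∈ ℝ^{V×V} symmetric positive definite, and let K = I_N − (I_N + L)⁻¹. Then trace(K) = (α/(α+1))·2^V + (α+1)⁻²·trace[(Diag(ν) + μμᵀ)·((α+1)⁻¹·(Diag(ν) + μμᵀ) + A⁻¹)⁻¹]. -/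
open Matrix

/-! By the Woodbury identity, inverting `1 + L = (α + 1) • 1 + M * A * Mᴴ` reduces to inverting the
small matrix `A⁻¹ + (α + 1)⁻¹ • (Mᴴ * M)`, which is positive definite. Cyclicity of the trace then
moves the outer `M` next to `Mᴴ`, so that `M` enters only through `Mᴴ * M = Φᴴ * diagonal p * Φ`. -/

section Woodbury

variable {ι κ R : Type*} [Fintype ι] [DecidableEq ι] [Fintype κ] [DecidableEq κ]

/-- The marginal kernel `K = 1 - (1 + L)⁻¹` of the determinantal point process with likelihood
kernel `L`. As a matrix inverse is `0` when it does not exist, this is `1` if `1 + L` is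
singular. -/
noncomputable def marginalKernel [CommRing R] (L : Matrix ι ι R) : Matrix ι ι R :=
  1 - (1 + L)⁻¹

variable [Field R] {c α : R} {U : Matrix ι κ R} {C : Matrix κ κ R} {W : Matrix κ ι R}

theorem inv_smul_one_add_mul_mul (hc : c ≠ 0) (hC : IsUnit C)
    (hCWU : IsUnit (c⁻¹ • (W * U) + C⁻¹)) :
    (c • (1 : Matrix ι ι R) + U * C * W)⁻¹ =
      c⁻¹ • 1 - (c ^ 2)⁻¹ • (U * (c⁻¹ • (W * U) + C⁻¹)⁻¹ * W) := by
  have h_inv : (c • (1 : Matrix ι ι R))⁻¹ = c⁻¹ • 1 :=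
    inv_eq_right_inv (by simp [smul_smul, hc])
  have h_unit : IsUnit (c • (1 : Matrix ι ι R)) :=
    isUnit_one.smul (Units.mk0 c hc)
  have h_mid : C⁻¹ + W * (c • (1 : Matrix ι ι R))⁻¹ * U = c⁻¹ • (W * U) + C⁻¹ := by
    rw [h_inv, Matrix.mul_smul, Matrix.mul_one, Matrix.smul_mul, add_comm]
  rw [add_mul_mul_inv_eq_sub _ U C W h_unit hC (h_mid ▸ hCWU), h_mid, h_inv]
  simp only [Matrix.smul_mul, Matrix.mul_smul, Matrix.one_mul, Matrix.mul_one, smul_smul, sq,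
    mul_inv]

theorem trace_marginalKernel_smul_one_add_mul_mul (hα : α + 1 ≠ 0) (hC : IsUnit C)
    (hCWU : IsUnit ((α + 1)⁻¹ • (W * U) + C⁻¹)) :
    (marginalKernel (α • (1 : Matrix ι ι R) + U * C * W)).trace =
      α / (α + 1) * Fintype.card ι +
        ((α + 1) ^ 2)⁻¹ * (W * U * ((α + 1)⁻¹ • (W * U) + C⁻¹)⁻¹).trace := by
  have h_shift : 1 + (α • (1 : Matrix ι ι R) + U * C * W) = (α + 1) • 1 + U * C * W := by
    rw [add_smul, one_smul, ← add_assoc, add_comm 1]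
  have h_coeff : 1 - (α + 1)⁻¹ = α / (α + 1) := by
    field_simp
    ring
  set X := ((α + 1)⁻¹ • (W * U) + C⁻¹)⁻¹
  calc (marginalKernel (α • (1 : Matrix ι ι R) + U * C * W)).trace
    _ = (1 - ((α + 1)⁻¹ • (1 : Matrix ι ι R) - ((α + 1) ^ 2)⁻¹ • (U * X * W))).trace := by
      rw [marginalKernel, h_shift, inv_smul_one_add_mul_mul hα hC hCWU]
    _ = (1 - (α + 1)⁻¹) * Fintype.card ι + ((α + 1) ^ 2)⁻¹ * (U * X * W).trace := by
      simp only [trace_sub, trace_smul, trace_one, smul_eq_mul]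
      ring
    _ = α / (α + 1) * Fintype.card ι + ((α + 1) ^ 2)⁻¹ * (W * U * X).trace := by
      rw [h_coeff, trace_mul_cycle]

end Woodbury

section SecondMoment

open scoped ComplexOrder

variable {𝕜 ι κ : Type*} [RCLike 𝕜] [Fintype ι] [DecidableEq ι]

theorem conjTranspose_mul_self_diagonal_sqrt_mul (Φ : Matrix ι κ 𝕜) {p : ι → ℝ}
    (hp : ∀ x, 0 ≤ p x) :
    (diagonal (fun x => (√(p x) : 𝕜)) * Φ)ᴴ * (diagonal (fun x => (√(p x) : 𝕜)) * Φ) =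
      Φᴴ * diagonal (fun x => (p x : 𝕜)) * Φ := by
  have h_sqrt (x : ι) : star (√(p x) : 𝕜) * √(p x) = p x := by
    rw [RCLike.star_def, RCLike.conj_ofReal, ← RCLike.ofReal_mul, Real.mul_self_sqrt (hp x)]
  rw [conjTranspose_mul, diagonal_conjTranspose, Matrix.mul_assoc, ← Matrix.mul_assoc (diagonal _),
    diagonal_mul_diagonal, ← Matrix.mul_assoc]
  simp only [Pi.star_apply, h_sqrt]

theorem stmt10_general [Fintype κ] [DecidableEq κ] (Φ : Matrix ι κ 𝕜) {p : ι → ℝ}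
    (hp : ∀ x, 0 ≤ p x) {M : Matrix ι κ 𝕜} (hM : M = diagonal (fun x => (√(p x) : 𝕜)) * Φ)
    {S : Matrix κ κ 𝕜} (hS : Φᴴ * diagonal (fun x => (p x : 𝕜)) * Φ = S)
    {α : ℝ} (hα : -1 < α) {A : Matrix κ κ 𝕜} (hA : A.PosDef) :
    (marginalKernel ((α : 𝕜) • (1 : Matrix ι ι 𝕜) + M * A * Mᴴ)).trace =
      α / (α + 1) * Fintype.card ι +
        (((α : 𝕜) + 1) ^ 2)⁻¹ * (S * (((α : 𝕜) + 1)⁻¹ • S + A⁻¹)⁻¹).trace := by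
  have hα_pos : (0 : 𝕜) < α + 1 := by exact_mod_cast neg_lt_iff_pos_add.mp hα
  have h_gram : Mᴴ * M = S := by rw [hM, conjTranspose_mul_self_diagonal_sqrt_mul Φ hp, hS]
  have h_posDef : (((α : 𝕜) + 1)⁻¹ • (Mᴴ * M) + A⁻¹).PosDef :=
    hA.inv.posSemidef_add ((posSemidef_conjTranspose_mul_self M).smul (inv_pos.mpr hα_pos).le)
  rw [trace_marginalKernel_smul_one_add_mul_mul hα_pos.ne' hA.isUnit h_posDef.isUnit, h_gram]

end SecondMoment

/-- with `N = 2^V`, `Σ = Diag(ν) + μμᵀ`, `L = α•I + M A Mᵀ`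
(`α ≥ 0`, `A ≻ 0`) and `K = I - (I+L)⁻¹`, one has
`tr K = (α/(α+1)) 2^V + (α+1)⁻² tr[(Diag(ν)+μμᵀ)((α+1)⁻¹(Diag(ν)+μμᵀ)+A⁻¹)⁻¹]`. -/
theorem stmt10 {ι : Type*} [Fintype ι] [DecidableEq ι] {V : ℕ}
    (hcard : Fintype.card ι = 2 ^ V)
    (Φ : Matrix ι (Fin V) ℝ) (p : ι → ℝ) (hp : ∀ x, 0 ≤ p x)
    (M : Matrix ι (Fin V) ℝ)
    (hM : M = Matrix.diagonal (fun x => Real.sqrt (p x)) * Φ)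
    (ν μ : Fin V → ℝ)
    (hS : Φᵀ * Matrix.diagonal p * Φ = Matrix.diagonal ν + Matrix.vecMulVec μ μ)
    (α : ℝ) (hα : 0 ≤ α)
    (A : Matrix (Fin V) (Fin V) ℝ) (hA : A.PosDef)
    (L : Matrix ι ι ℝ) (hL : L = α • (1 : Matrix ι ι ℝ) + M * A * Mᵀ)
    (K : Matrix ι ι ℝ) (hK : K = (1 : Matrix ι ι ℝ) - ((1 : Matrix ι ι ℝ) + L)⁻¹) :
    K.trace = (α / (α + 1)) * 2 ^ V
      + ((α + 1) ^ 2)⁻¹ *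
          ((Matrix.diagonal ν + Matrix.vecMulVec μ μ)
            * ((α + 1)⁻¹ • (Matrix.diagonal ν + Matrix.vecMulVec μ μ) + A⁻¹)⁻¹).trace := by
  subst hL hK
  simpa [marginalKernel, hcard] using stmt10_general Φ hp hM hS (neg_one_lt_zero.trans_le hα) hA
end

section
/- Let A ∈ ℝ^{V×V} be symmetric positive definite, ρ > 0, ν ∈ ℝ^V with ν_k > 0 for all k, and μ ∈ ℝ^V. Then det(A⁻¹ + ρ·Diag(ν) + ρ·μμᵀ) = [1 + μᵀ·(Diag(1/ν) − Diag(1/ν)·(ρ·A + Diag(1/ν))⁻¹·Diag(1/ν))·μ] · det(A⁻¹ + ρ·Diag(ν)). -/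
open Matrix

/-!
With `S = ρA + N⁻¹`, the factorization `A⁻¹ + ρN = A⁻¹ S N` gives
`ρ(A⁻¹ + ρN)⁻¹ = N⁻¹ S⁻¹ (ρA) = N⁻¹ S⁻¹ (S - N⁻¹) = N⁻¹ - N⁻¹ S⁻¹ N⁻¹`,
which is the matrix that the determinant lemma for rank-one updates produces. Unlike the Woodbury
identity, this does not divide by `ρ`.
-/

section CommRing

variable {n R : Type*} [Fintype n] [DecidableEq n] [CommRing R]

theorem det_add_vecMulVec {M : Matrix n n R} (hM : IsUnit M) (u v : n → R) :
    (M + vecMulVec u v).det = (1 + v ⬝ᵥ (M⁻¹ *ᵥ u)) * M.det := by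
  rw [vecMulVec_eq Unit,
    det_add_replicateCol_mul_replicateRow (M.isUnit_iff_isUnit_det.mp hM), Matrix.mul_assoc,
    ← replicateCol_mulVec, det_one_add_mul_comm, det_one_add_replicateCol_mul_replicateRow,
    mul_comm]

theorem inv_add_smul_eq_mul_mul {A N : Matrix n n R} (hA : IsUnit A) (hN : IsUnit N) (ρ : R) :
    A⁻¹ + ρ • N = A⁻¹ * (ρ • A + N⁻¹) * N := by
  rw [mul_add, Matrix.mul_smul, nonsing_inv_mul _ (A.isUnit_iff_isUnit_det.mp hA), add_mul,
    Matrix.smul_mul, one_mul,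
    nonsing_inv_mul_cancel_right _ _ (N.isUnit_iff_isUnit_det.mp hN), add_comm]

theorem isUnit_inv_add_smul {A N : Matrix n n R} {ρ : R} (hA : IsUnit A) (hN : IsUnit N)
    (hS : IsUnit (ρ • A + N⁻¹)) : IsUnit (A⁻¹ + ρ • N) := by
  rw [inv_add_smul_eq_mul_mul hA hN]
  exact ((isUnit_nonsing_inv_iff.mpr hA).mul hS).mul hN

theorem smul_inv_inv_add_smul {A N : Matrix n n R} {ρ : R} (hA : IsUnit A) (hN : IsUnit N)
    (hS : IsUnit (ρ • A + N⁻¹)) :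
    ρ • (A⁻¹ + ρ • N)⁻¹ = N⁻¹ - N⁻¹ * (ρ • A + N⁻¹)⁻¹ * N⁻¹ := by
  set S := ρ • A + N⁻¹ with hSdef
  calc
    ρ • (A⁻¹ + ρ • N)⁻¹ = ρ • (A⁻¹ * S * N)⁻¹ := by rw [inv_add_smul_eq_mul_mul hA hN]
    _ = N⁻¹ * S⁻¹ * (ρ • A) := by
      rw [Matrix.mul_inv_rev, Matrix.mul_inv_rev,
        nonsing_inv_nonsing_inv _ (A.isUnit_iff_isUnit_det.mp hA), Matrix.mul_smul, mul_assoc]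
    _ = N⁻¹ * S⁻¹ * (S - N⁻¹) := by rw [hSdef, add_sub_cancel_right]
    _ = N⁻¹ - N⁻¹ * S⁻¹ * N⁻¹ := by
      rw [mul_sub, nonsing_inv_mul_cancel_right _ _ (S.isUnit_iff_isUnit_det.mp hS)]

theorem stmt11_general {A N : Matrix n n R} {ρ : R} (hA : IsUnit A) (hN : IsUnit N)
    (hS : IsUnit (ρ • A + N⁻¹)) (u v : n → R) :
    (A⁻¹ + ρ • N + ρ • vecMulVec u v).det
      = (1 + v ⬝ᵥ ((N⁻¹ - N⁻¹ * (ρ • A + N⁻¹)⁻¹ * N⁻¹) *ᵥ u)) * (A⁻¹ + ρ • N).det := by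
  rw [← smul_vecMulVec, det_add_vecMulVec (isUnit_inv_add_smul hA hN hS), mulVec_smul,
    ← smul_mulVec, smul_inv_inv_add_smul hA hN hS]

end CommRing

theorem inv_diagonal_of_ne_zero {n K : Type*} [Fintype n] [DecidableEq n] [Field K] {d : n → K}
    (hd : ∀ i, d i ≠ 0) : (diagonal d)⁻¹ = diagonal fun i ↦ (d i)⁻¹ :=
  inv_eq_right_inv <| by simp [hd]

/-- matrix determinant lemma step:
`det(A⁻¹ + ρ Diag(ν) + ρ μμᵀ)
  = [1 + μᵀ(Diag(1/ν) - Diag(1/ν)(ρA + Diag(1/ν))⁻¹ Diag(1/ν))μ] det(A⁻¹ + ρ Diag(ν))`. -/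
theorem stmt11 {V : ℕ}
    (A : Matrix (Fin V) (Fin V) ℝ) (hA : A.PosDef)
    (ρ : ℝ) (hρ : 0 < ρ)
    (ν : Fin V → ℝ) (hν : ∀ k, 0 < ν k) (μ : Fin V → ℝ) :
    (A⁻¹ + ρ • Matrix.diagonal ν + ρ • Matrix.vecMulVec μ μ).det
      = (1 + μ ⬝ᵥ ((Matrix.diagonal (fun k => (ν k)⁻¹)
            - Matrix.diagonal (fun k => (ν k)⁻¹)
              * (ρ • A + Matrix.diagonal (fun k => (ν k)⁻¹))⁻¹
              * Matrix.diagonal (fun k => (ν k)⁻¹)) *ᵥ μ))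
          * (A⁻¹ + ρ • Matrix.diagonal ν).det := by
  rw [← inv_diagonal_of_ne_zero fun k ↦ (hν k).ne']
  have hN : (diagonal ν).PosDef := .diagonal hν
  exact stmt11_general hA.isUnit hN.isUnit ((hA.smul hρ).add hN.inv).isUnit μ μ
end

section
/- Let A = γ·I_V + U·Diag(θ)·Uᵀ with γ > 0, θ ∈ ℝ^r with θ_k > 0 for all k, U ∈ ℝ^{V×r}, and let ρ > 0 and ν ∈ ℝ^V with ν_k > 0 for all k. Then det(A⁻¹ + ρ·Diag(ν)) · det(Diag(γ/θ) + UᵀU) = det(Diag(γ/θ) + Uᵀ·Diag(νγρ/(1+νγρ))·U) · det((1/γ)·I_V + ρ·Diag(ν)), where νγρ/(1+νγρ) is the vector with entries ν_kγρ/(1+ν_kγρ) and γ/θ has entries γ/θ_k. -/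
open Matrix

/-!
Put `D = Diag(γ/θ)`, `N = ρ Diag(ν)` and `W = Diag(νγρ/(1+νγρ))`. By the matrix determinant lemma
the two `r × r` determinants are `det D` times `det (1 + U D⁻¹ Uᵀ)` and `det (1 + W U D⁻¹ Uᵀ)`, so
it suffices to compare products of `V × V` matrices. Since `A = γ (1 + U D⁻¹ Uᵀ)` and
`(γ⁻¹ I + N) W = N`, both `(A⁻¹ + N) (1 + U D⁻¹ Uᵀ)` and `(γ⁻¹ I + N) (1 + W U D⁻¹ Uᵀ)` equal
`γ⁻¹ I + N + N U D⁻¹ Uᵀ`.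
-/

theorem posDef_smul_one_add_mul_diagonal_mul_conjTranspose {m n R : Type*} [Finite m]
    [DecidableEq m] [Fintype n] [DecidableEq n] [Ring R] [PartialOrder R] [StarRing R]
    [StarOrderedRing R] [NoZeroDivisors R] {γ : R} (hγ : 0 < γ) {θ : n → R} (hθ : 0 ≤ θ)
    (U : Matrix m n R) :
    (γ • (1 : Matrix m m R) + U * diagonal θ * Uᴴ).PosDef := by
  have := Fintype.ofFinite m
  rw [smul_one_eq_diagonal]
  exact (PosDef.diagonal fun _ ↦ hγ).add_posSemidef
    ((PosSemidef.diagonal hθ).mul_mul_conjTranspose_same U)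

section

variable {m n : Type*} [Fintype m] [DecidableEq m] [Fintype n] [DecidableEq n]

theorem det_add_mul_det_add_mul_of_mul_eq {R : Type*} [CommRing R]
    {B C N W : Matrix m m R} {D : Matrix n n R} (U : Matrix m n R) (V : Matrix n m R)
    (hD : IsUnit D.det) (hB : B * (1 + U * D⁻¹ * V) = C) (hW : (C + N) * W = N) :
    (B + N).det * (D + V * U).det = (D + V * W * U).det * (C + N).det := by
  have hprod : (B + N) * (1 + U * D⁻¹ * V) = (C + N) * (1 + W * U * D⁻¹ * V) :=
    calc (B + N) * (1 + U * D⁻¹ * V)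
        = C + N + N * (U * D⁻¹ * V) := by
          rw [Matrix.add_mul, hB, Matrix.mul_add, Matrix.mul_one, add_assoc]
      _ = C + N + (C + N) * W * (U * D⁻¹ * V) := by rw [hW]
      _ = (C + N) * (1 + W * U * D⁻¹ * V) := by
          simp only [Matrix.mul_add, Matrix.mul_one, Matrix.mul_assoc]
  have hdet := congrArg det hprod
  rw [det_mul, det_mul] at hdet
  rw [Matrix.mul_assoc V W U, det_add_mul V U hD, det_add_mul V (W * U) hD]
  linear_combination D.det * hdet

variable {K : Type*} [Field K] {γ : K}

theorem diagonal_div_mul_smul_diagonal (hγ : γ ≠ 0) {θ : n → K} (hθ : ∀ k, θ k ≠ 0) :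
    diagonal (fun k ↦ γ / θ k) * (γ⁻¹ • diagonal θ) = 1 := by
  rw [← diagonal_smul, diagonal_mul_diagonal, ← diagonal_one]
  congr 1
  funext k
  have := hθ k
  simp only [Pi.smul_apply, smul_eq_mul]
  field_simp

theorem inv_mul_one_add_mul_inv_diagonal_div_mul (hγ : γ ≠ 0) {θ : n → K} (hθ : ∀ k, θ k ≠ 0)
    {U : Matrix m n K} {V : Matrix n m K} {A : Matrix m m K}
    (hA : A = γ • (1 : Matrix m m K) + U * diagonal θ * V) (hunit : IsUnit A) :
    A⁻¹ * (1 + U * (diagonal fun k ↦ γ / θ k)⁻¹ * V) = γ⁻¹ • (1 : Matrix m m K) := by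
  have hfactor : 1 + U * (diagonal fun k ↦ γ / θ k)⁻¹ * V = γ⁻¹ • A := by
    rw [inv_eq_right_inv (diagonal_div_mul_smul_diagonal hγ hθ), hA, smul_add,
      inv_smul_smul₀ hγ, Matrix.mul_smul, Matrix.smul_mul]
  rw [hfactor, Matrix.mul_smul, nonsing_inv_mul A ((isUnit_iff_isUnit_det A).mp hunit)]

theorem smul_one_add_smul_diagonal_mul_diagonal_div (hγ : γ ≠ 0) {ρ : K} {ν : m → K}
    (hν : ∀ k, 1 + ν k * γ * ρ ≠ 0) :
    (γ⁻¹ • (1 : Matrix m m K) + ρ • diagonal ν)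
        * diagonal (fun k ↦ ν k * γ * ρ / (1 + ν k * γ * ρ))
      = ρ • diagonal ν := by
  rw [smul_one_eq_diagonal, ← diagonal_smul, diagonal_add, diagonal_mul_diagonal]
  congr 1
  funext k
  have hk : γ⁻¹ + ρ * ν k = γ⁻¹ * (1 + ν k * γ * ρ) := by field_simp
  rw [Pi.smul_apply, smul_eq_mul, hk, mul_assoc, mul_div_cancel₀ _ (hν k)]
  field_simp

theorem stmt13_general (hγ : γ ≠ 0) {θ : n → K} (hθ : ∀ k, θ k ≠ 0) {U : Matrix m n K}
    {V : Matrix n m K} {ρ : K} {ν : m → K} (hν : ∀ k, 1 + ν k * γ * ρ ≠ 0) {A : Matrix m m K}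
    (hA : A = γ • (1 : Matrix m m K) + U * diagonal θ * V) (hunit : IsUnit A) :
    (A⁻¹ + ρ • diagonal ν).det * (diagonal (fun k ↦ γ / θ k) + V * U).det
      = (diagonal (fun k ↦ γ / θ k)
            + V * diagonal (fun k ↦ ν k * γ * ρ / (1 + ν k * γ * ρ)) * U).det
          * (γ⁻¹ • (1 : Matrix m m K) + ρ • diagonal ν).det :=
  det_add_mul_det_add_mul_of_mul_eq U V
    (isUnit_det_of_right_inverse (diagonal_div_mul_smul_diagonal hγ hθ))
    (inv_mul_one_add_mul_inv_diagonal_div_mul hγ hθ hA hunit)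
    (smul_one_add_smul_diagonal_mul_diagonal_div hγ hν)

end

/-- determinant identity for `A = γI + U Diag(θ) Uᵀ`:
`det(A⁻¹ + ρ Diag(ν)) det(Diag(γ/θ) + UᵀU)
  = det(Diag(γ/θ) + Uᵀ Diag(νγρ/(1+νγρ)) U) det((1/γ)I + ρ Diag(ν))`. -/
theorem stmt13 {V r : ℕ}
    (γ : ℝ) (hγ : 0 < γ)
    (θ : Fin r → ℝ) (hθ : ∀ k, 0 < θ k)
    (U : Matrix (Fin V) (Fin r) ℝ)
    (ρ : ℝ) (hρ : 0 < ρ)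
    (ν : Fin V → ℝ) (hν : ∀ k, 0 < ν k)
    (A : Matrix (Fin V) (Fin V) ℝ)
    (hA : A = γ • (1 : Matrix (Fin V) (Fin V) ℝ) + U * Matrix.diagonal θ * Uᵀ) :
    (A⁻¹ + ρ • Matrix.diagonal ν).det
        * (Matrix.diagonal (fun k => γ / θ k) + Uᵀ * U).det
      = (Matrix.diagonal (fun k => γ / θ k)
            + Uᵀ * Matrix.diagonal (fun k => ν k * γ * ρ / (1 + ν k * γ * ρ)) * U).det
          * (γ⁻¹ • (1 : Matrix (Fin V) (Fin V) ℝ) + ρ • Matrix.diagonal ν).det := by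
  exact stmt13_general hγ.ne' (fun k ↦ (hθ k).ne') (fun k ↦ by have := hν k; positivity) hA
    (hA ▸ (posDef_smul_one_add_mul_diagonal_mul_conjTranspose hγ (fun k ↦ (hθ k).le) U).isUnit)
end
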